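/- For every nonnegative integer n and nonzero complex numbers q, x with no vanishing denominators: sum over k from 0 to n of (q^{-3n};q^3)_k * (x;q)_k (1/x;q)_k / ((q;q)_k (-1;q)_k (q^{1/2};q)_k (-q^{1/2};q)_k (q^{-3n};q)_k) * q^k equals (1/2) * ((qx;q^3)_n (q^2/x;q^3)_n)/((q;q^3)_n (q^2;q^3)_n) + (1/2) * ((q^2 x;q^3)_n (q/x;q^3)_n)/((q;q^3)_n (q^2;q^3)_n). -/

import Mathlib

/-- q-Pochhammer symbol `(a; q)_k`. -/
noncomputable def qpoch (a q : ℂ) (k : ℕ) : ℂ := ∏ j ∈ Finset.range k, (1 - a * q ^ j)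

open Filter Topology

lemma qpoch_succ (a q : ℂ) (k : ℕ) : qpoch a q (k + 1) = qpoch a q k * (1 - a * q ^ k) := by
  simp [qpoch, Finset.prod_range_succ]

lemma qpoch_succ_left (a q : ℂ) (k : ℕ) : qpoch a q (k + 1) = (1 - a) * qpoch (q * a) q k := by
  simp only [qpoch, Finset.prod_range_succ', pow_zero, mul_one]
  rw [mul_comm]
  congr 1
  refine Finset.prod_congr rfl fun j _ => ?_
  ring

/-- The `x`-free factor of the summand in the `q`-Gosper sum, with `N` in place of `q ^ (3 * n)`. -/
noncomputable def gosperCoeff (N q : ℂ) (k : ℕ) : ℂ :=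
  ∏ j ∈ Finset.range k,
    q * (N - (q ^ j) ^ 3) / ((1 - q * (q ^ j) ^ 2) * (1 - q ^ 2 * (q ^ j) ^ 2) * (N - q ^ j))

lemma gosperCoeff_succ (N q : ℂ) (k : ℕ) :
    gosperCoeff N q (k + 1) = gosperCoeff N q k *
      (q * (N - (q ^ k) ^ 3) /
        ((1 - q * (q ^ k) ^ 2) * (1 - q ^ 2 * (q ^ k) ^ 2) * (N - q ^ k))) := by
  rw [gosperCoeff, Finset.prod_range_succ, ← gosperCoeff]

/-- The summand of the `q`-Gosper sum. -/
noncomputable def gosperTerm (N q x : ℂ) (k : ℕ) : ℂ :=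
  gosperCoeff N q k * (qpoch x q k * qpoch (q / x) q k)

lemma gosperTerm_succ (N q x : ℂ) (k : ℕ) :
    gosperTerm N q x (k + 1) = gosperTerm N q x k *
      (q * (N - (q ^ k) ^ 3) /
        ((1 - q * (q ^ k) ^ 2) * (1 - q ^ 2 * (q ^ k) ^ 2) * (N - q ^ k)) *
        ((1 - x * q ^ k) * (1 - q / x * q ^ k))) := by
  simp only [gosperTerm, gosperCoeff_succ, qpoch_succ]
  ring

lemma pow_sub_pow_ne_zero {q : ℂ} (hq : q ≠ 0) {m : ℕ} (h : ∀ i, 1 ≤ i → i ≤ m → q ^ i ≠ 1)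
    {a b : ℕ} (hab : b < a) (ham : a ≤ m) : q ^ a - q ^ b ≠ 0 := by
  have h1 : q ^ a - q ^ b = q ^ b * (q ^ (a - b) - 1) := by
    rw [mul_sub, ← pow_add, Nat.add_sub_cancel' hab.le, mul_one]
  rw [h1]
  exact mul_ne_zero (pow_ne_zero _ hq) (sub_ne_zero.2 (h _ (by omega) (by omega)))

lemma one_sub_pow_ne_zero {q : ℂ} {m : ℕ} (h : ∀ i, 1 ≤ i → i ≤ m → q ^ i ≠ 1)
    {a : ℕ} (ha : 1 ≤ a) (ham : a ≤ m) : 1 - q ^ a ≠ 0 :=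
  sub_ne_zero.2 (h a ha ham).symm

/-- Contiguity of `gosperTerm` under `n ↦ n + 1`. -/
lemma gosperTerm_shift (n : ℕ) (q x : ℂ) (hq : q ≠ 0)
    (h : ∀ i, 1 ≤ i → i ≤ 3 * (n + 1) → q ^ i ≠ 1) (k : ℕ) (hk : k ≤ n) :
    gosperTerm (q ^ (3 * (n + 1))) q x k *
        ((q ^ (3 * (n + 1)) - (q ^ k) ^ 3) * (q ^ (3 * (n + 1)) - q) * (q ^ (3 * (n + 1)) - q ^ 2))
      = gosperTerm (q ^ (3 * n)) q x k *
        ((q ^ (3 * (n + 1)) - q ^ k) * (q ^ (3 * (n + 1)) - q * q ^ k) *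
          (q ^ (3 * (n + 1)) - q ^ 2 * q ^ k)) := by
  induction k with
  | zero => simp [gosperTerm, gosperCoeff, qpoch]
  | succ k ih =>
    have ih := ih (by omega)
    have e1 : (q ^ (3 * n) - q ^ k) ≠ 0 := pow_sub_pow_ne_zero hq h (by omega) (by omega)
    have e2 : (q ^ (3 * (n + 1)) - q ^ k) ≠ 0 := pow_sub_pow_ne_zero hq h (by omega) le_rfl
    have e3 := pow_sub_pow_ne_zero hq h (a := 3 * (n + 1)) (b := k * 3) (by omega) le_rfl
    have e4 := one_sub_pow_ne_zero h (a := 1 + k * 2) (by omega) (by omega)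
    have e5 := one_sub_pow_ne_zero h (a := 2 + k * 2) (by omega) (by omega)
    have hM : q ^ (3 * (n + 1)) = q ^ 3 * q ^ (3 * n) := by ring
    rw [gosperTerm_succ, gosperTerm_succ]
    simp only [pow_add q 1, pow_add q 2, pow_mul q k, pow_one] at e3 e4 e5
    rw [hM] at ih e2 e3 ⊢
    rw [pow_succ q k]
    generalize q ^ (3 * n) = N at *
    generalize q ^ k = K at *
    generalize gosperTerm N q x k = F at *
    generalize gosperTerm (q ^ 3 * N) q x k = F' at *
    have hF : F' * ((q ^ 3 * N - q) * (q ^ 3 * N - q ^ 2)) =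
        F * ((q ^ 3 * N - K) * (q ^ 3 * N - q * K) * (q ^ 3 * N - q ^ 2 * K)) /
          (q ^ 3 * N - K ^ 3) := by
      rw [eq_div_iff e3, ← ih]; ring
    generalize (1 - x * K) * (1 - q / x * K) = X
    calc _ = F' * ((q ^ 3 * N - q) * (q ^ 3 * N - q ^ 2)) *
          (q * (q ^ 3 * N - K ^ 3) / ((1 - q * K ^ 2) * (1 - q ^ 2 * K ^ 2) * (q ^ 3 * N - K)) * X
            * (q ^ 3 * N - (K * q) ^ 3)) := by ring
      _ = _ := by
        rw [hF]
        field_simp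

/-- The telescoped creative-telescoping relation for the `q`-Gosper sum. -/
lemma gosperTerm_telescope (n : ℕ) (q x : ℂ) (hq : q ≠ 0) (hx : x ≠ 0)
    (h : ∀ i, 1 ≤ i → i ≤ 3 * (n + 1) → q ^ i ≠ 1) (m : ℕ) (hm : m ≤ n) :
    (1 - q * q ^ (3 * n)) * (1 - q ^ 2 * q ^ (3 * n)) *
        ∑ k ∈ Finset.range (m + 1), gosperTerm (q ^ (3 * (n + 1))) q x k
      - (1 - q * x * q ^ (3 * n)) * (1 - q ^ 2 / x * q ^ (3 * n)) *
        ∑ k ∈ Finset.range (m + 1), gosperTerm (q ^ (3 * n)) q x k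
      = -(q * q ^ (3 * n) / q ^ m) * ((1 - x * q ^ m) * (1 - q / x * q ^ m)) *
        gosperTerm (q ^ (3 * n)) q x m := by
  induction m with
  | zero =>
    simp [gosperTerm, gosperCoeff, qpoch]
    field_simp
    ring
  | succ m ih =>
    have ih := ih (by omega)
    rw [Finset.sum_range_succ, Finset.sum_range_succ _ (m + 1)]
    have hs := gosperTerm_shift n q x hq h (m + 1) hm
    rw [gosperTerm_succ (q ^ (3 * n))] at hs ⊢
    have e1 : (q ^ (3 * n) - q ^ m) ≠ 0 := pow_sub_pow_ne_zero hq h (by omega) (by omega)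
    have e3 := pow_sub_pow_ne_zero hq h (a := 3 * (n + 1)) (b := 3 + m * 3) (by omega) le_rfl
    have e4 := one_sub_pow_ne_zero h (a := 1 + m * 2) (by omega) (by omega)
    have e5 := one_sub_pow_ne_zero h (a := 2 + m * 2) (by omega) (by omega)
    have hK : q ^ m ≠ 0 := pow_ne_zero _ hq
    have hM : q ^ (3 * (n + 1)) = q ^ 3 * q ^ (3 * n) := by ring
    simp only [pow_add q 1, pow_add q 2, pow_add q 3, pow_mul q m, pow_one] at e3 e4 e5
    rw [pow_succ q m] at hs ⊢
    rw [hM] at ih hs e3 ⊢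
    generalize gosperTerm (q ^ 3 * q ^ (3 * n)) q x (m + 1) = F' at *
    generalize gosperTerm (q ^ (3 * n)) q x m = F at *
    generalize q ^ (3 * n) = N at *
    generalize q ^ m = K at *
    have e3' : N - K ^ 3 ≠ 0 := by
      intro h0; apply e3; rw [← mul_sub, h0, mul_zero]
    rw [mul_add, mul_add]
    have key : (1 - q * N) * (1 - q ^ 2 * N) * F' =
        F * (q * (N - K ^ 3) / ((1 - q * K ^ 2) * (1 - q ^ 2 * K ^ 2) * (N - K)) *
            ((1 - x * K) * (1 - q / x * K))) *
          ((q ^ 3 * N - K * q) * (q ^ 3 * N - q * (K * q)) * (q ^ 3 * N - q ^ 2 * (K * q))) /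
          (q ^ 6 * (N - K ^ 3)) := by
      rw [eq_div_iff (mul_ne_zero (pow_ne_zero _ hq) e3'), ← hs]; ring
    rw [add_sub_add_comm, ih, key]
    field_simp
    ring

/-- The `q`-analogue of Gosper's sum, for `q` not a root of unity of order at most `3 * n`. -/
lemma sum_gosperTerm (n : ℕ) (q x : ℂ) (hq : q ≠ 0) (hx : x ≠ 0)
    (h : ∀ i, 1 ≤ i → i ≤ 3 * n → q ^ i ≠ 1) :
    ∑ k ∈ Finset.range (n + 1), gosperTerm (q ^ (3 * n)) q x k
      = (qpoch (q * x) (q ^ 3) n * qpoch (q ^ 2 / x) (q ^ 3) n) /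
            (qpoch q (q ^ 3) n * qpoch (q ^ 2) (q ^ 3) n) := by
  induction n with
  | zero => simp [gosperTerm, gosperCoeff, qpoch]
  | succ n ih =>
    have ih := ih fun i h1 h2 => h i h1 (by omega)
    have ht := gosperTerm_telescope n q x hq hx h n le_rfl
    have hs := gosperTerm_shift n q x hq h n le_rfl
    have e2 : (q ^ (3 * (n + 1)) - q ^ n) ≠ 0 := pow_sub_pow_ne_zero hq h (by omega) le_rfl
    have e3 := pow_sub_pow_ne_zero hq h (a := 3 * (n + 1)) (b := n * 3) (by omega) le_rfl
    have e4 := one_sub_pow_ne_zero h (a := 1 + n * 2) (by omega) (by omega)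
    have e5 := one_sub_pow_ne_zero h (a := 2 + n * 2) (by omega) (by omega)
    have e6 := one_sub_pow_ne_zero h (a := 1 + n * 3) (by omega) (by omega)
    have e7 := one_sub_pow_ne_zero h (a := 2 + n * 3) (by omega) (by omega)
    have hK : q ^ n ≠ 0 := pow_ne_zero _ hq
    have hM : q ^ (3 * (n + 1)) = q ^ 3 * (q ^ n) ^ 3 := by ring
    have hN : q ^ (3 * n) = (q ^ n) ^ 3 := by ring
    have hN' : (q ^ 3) ^ n = (q ^ n) ^ 3 := by ring
    simp only [qpoch_succ]
    rw [Finset.sum_range_succ, gosperTerm_succ, mul_mul_mul_comm,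
      mul_mul_mul_comm (qpoch q (q ^ 3) n),
      mul_div_mul_comm (qpoch (q * x) (q ^ 3) n * _), ← ih]
    simp only [pow_add q 1, pow_add q 2, pow_mul q n, pow_one] at e3 e4 e5 e6 e7
    rw [hN']
    rw [hM, hN] at ht hs
    rw [hM] at e2 e3 ⊢
    rw [hN]
    generalize gosperTerm (q ^ 3 * (q ^ n) ^ 3) q x n = F' at *
    generalize gosperTerm ((q ^ n) ^ 3) q x n = F at *
    generalize ∑ k ∈ Finset.range (n + 1), gosperTerm ((q ^ n) ^ 3) q x k = S at *
    generalize ∑ k ∈ Finset.range (n + 1), gosperTerm (q ^ 3 * (q ^ n) ^ 3) q x k = S' at *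
    generalize q ^ n = K at *
    have key : (1 - q * K ^ 3) * (1 - q ^ 2 * K ^ 3) * F' =
        F * ((q ^ 3 * K ^ 3 - K) * (q ^ 3 * K ^ 3 - q * K) * (q ^ 3 * K ^ 3 - q ^ 2 * K)) /
          (q ^ 3 * (q ^ 3 * K ^ 3 - K ^ 3)) := by
      rw [eq_div_iff (mul_ne_zero (pow_ne_zero _ hq) e3), ← hs]; ring
    rw [mul_div_assoc', eq_div_iff (mul_ne_zero e6 e7)]
    have key2 : (1 - q * K ^ 3) * (1 - q ^ 2 * K ^ 3) *
        (F' * (q * (q ^ 3 * K ^ 3 - K ^ 3) /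
            ((1 - q * K ^ 2) * (1 - q ^ 2 * K ^ 2) * (q ^ 3 * K ^ 3 - K)) *
          ((1 - x * K) * (1 - q / x * K)))) =
        q * K ^ 3 / K * ((1 - x * K) * (1 - q / x * K)) * F := by
      have e2' : q ^ 3 * K ^ 2 - 1 ≠ 0 := fun h0 => e2 (by linear_combination K * h0)
      have e3' : q ^ 3 - 1 ≠ 0 := fun h0 => e3 (by linear_combination K ^ 3 * h0)
      rw [← mul_assoc, key]
      field_simp
      ring
    linear_combination ht + key2

lemma qpoch_mul_qpoch_symm (q x : ℂ) (hx : x ≠ 0) (k : ℕ) :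
    qpoch x q k * qpoch (q / x) q k + qpoch (1 / x) q k * qpoch (q / (1 / x)) q k
      = (1 + q ^ k) * (qpoch x q k * qpoch (1 / x) q k) := by
  cases k with
  | zero => simp [qpoch]
  | succ k =>
    have e1 : q / (1 / x) = q * x := by simp
    have e2 : q / x = q * (1 / x) := by ring
    rw [e1, e2, qpoch_succ_left x, qpoch_succ_left (1 / x), qpoch_succ (q * x),
      qpoch_succ (q * (1 / x))]
    field_simp
    ring

lemma coeff_eq_gosperCoeff (n : ℕ) (q s : ℂ) (hs : s ^ 2 = q) (hq : q ≠ 0)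
    (h : ∀ i, 1 ≤ i → i ≤ 3 * n → q ^ i ≠ 1) (k : ℕ) (hk : k ≤ n) :
    qpoch (q ^ (-(3 * n : ℤ))) (q ^ 3) k /
        (qpoch q q k * qpoch (-1) q k * qpoch s q k * qpoch (-s) q k *
          qpoch (q ^ (-(3 * n : ℤ))) q k) * q ^ k
      = (1 + q ^ k) / 2 * gosperCoeff (q ^ (3 * n)) q k := by
  have hN : q ^ (-(3 * n : ℤ)) = (q ^ (3 * n))⁻¹ := by
    rw [zpow_neg]; norm_cast
  rw [hN]
  induction k with
  | zero => simp [gosperCoeff, qpoch]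
  | succ k ih =>
    have ih := ih (by omega)
    have e1 : (q ^ (3 * n) - q ^ k) ≠ 0 := pow_sub_pow_ne_zero hq h (by omega) le_rfl
    have e4 := one_sub_pow_ne_zero h (a := 1 + k * 2) (by omega) (by omega)
    have e5 := one_sub_pow_ne_zero h (a := 2 + k * 2) (by omega) (by omega)
    have e6 : 1 + q ^ k ≠ 0 := by
      rcases Nat.eq_zero_or_pos k with rfl | hk0
      · norm_num
      · have := one_sub_pow_ne_zero h (a := k * 2) (by omega) (by omega)
        rw [pow_mul] at this
        intro h0
        apply this
        linear_combination (1 - q ^ k) * h0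
    have hN0 : q ^ (3 * n) ≠ 0 := pow_ne_zero _ hq
    have hq3 : (q ^ 3) ^ k = (q ^ k) ^ 3 := by ring
    simp only [qpoch_succ, gosperCoeff_succ]
    simp only [pow_add q 1, pow_add q 2, pow_mul q k, pow_one] at e4 e5
    rw [hq3, pow_succ q k]
    generalize q ^ (3 * n) = N at *
    generalize q ^ k = K at *
    have e7 : 1 - q * K ≠ 0 := fun h0 => e5 (by linear_combination (1 + q * K) * h0)
    have e8 : 1 + K * q ≠ 0 := fun h0 => e5 (by linear_combination (1 - q * K) * h0)
    have e9 : (1 - s * K) * (1 - -s * K) = 1 - q * K ^ 2 := by rw [← hs]; ring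
    have e10 : (1 - q * K) * (1 + q * K) = 1 - q ^ 2 * K ^ 2 := by ring
    have e11 : 1 - N⁻¹ * K = (N - K) / N := by field_simp
    have e12 : 1 - N⁻¹ * K ^ 3 = (N - K ^ 3) / N := by field_simp
    rw [← e10]
    calc _ = (qpoch N⁻¹ (q ^ 3) k /
        (qpoch q q k * qpoch (-1) q k * qpoch s q k * qpoch (-s) q k * qpoch N⁻¹ q k) * K) *
        ((1 - N⁻¹ * K ^ 3) * q / ((1 - q * K) * (1 + K) * ((1 - s * K) * (1 - -s * K)) *
          (1 - N⁻¹ * K))) := by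
          rw [div_mul_eq_mul_div, div_mul_eq_mul_div, div_mul_div_comm]
          congr 1 <;> ring
      _ = _ := by
        rw [ih, e9, e11, e12]
        field_simp

lemma q_gosper_first_ext_of_pow_ne_one (n : ℕ) (q x s : ℂ) (hs : s ^ 2 = q)
    (hq : q ≠ 0) (hx : x ≠ 0) (h : ∀ i, 1 ≤ i → i ≤ 3 * n → q ^ i ≠ 1) :
    ∑ k ∈ Finset.range (n+1),
      qpoch (q ^ (-(3*n : ℤ))) (q^3) k * (qpoch x q k * qpoch (1/x) q k) /
        (qpoch q q k * qpoch (-1) q k * qpoch s q k * qpoch (-s) q k *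
          qpoch (q ^ (-(3*n : ℤ))) q k) * q^k
      = (1/2 : ℂ) * ((qpoch (q*x) (q^3) n * qpoch (q^2/x) (q^3) n) /
            (qpoch q (q^3) n * qpoch (q^2) (q^3) n))
        + (1/2 : ℂ) * ((qpoch (q^2*x) (q^3) n * qpoch (q/x) (q^3) n) /
            (qpoch q (q^3) n * qpoch (q^2) (q^3) n)) := by
  have h1 := sum_gosperTerm n q x hq hx h
  have h2 := sum_gosperTerm n q (1 / x) hq (one_div_ne_zero hx) h
  have e1 : q ^ 2 / (1 / x) = q ^ 2 * x := by simp
  have e2 : q * (1 / x) = q / x := by ring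
  rw [e1, e2, mul_comm (qpoch (q / x) _ _)] at h2
  rw [← h1, ← h2, ← mul_add, ← Finset.sum_add_distrib, Finset.mul_sum]
  refine Finset.sum_congr rfl fun k hk => ?_
  have hc := coeff_eq_gosperCoeff n q s hs hq h k (by simpa [Nat.lt_succ_iff] using hk)
  rw [gosperTerm, gosperTerm, ← mul_add, qpoch_mul_qpoch_symm q x hx, mul_div_right_comm,
    mul_right_comm, hc]
  ring

lemma ContinuousAt.qpoch {f g : ℂ → ℂ} {a : ℂ} (hf : ContinuousAt f a) (hg : ContinuousAt g a)
    (k : ℕ) : ContinuousAt (fun t => qpoch (f t) (g t) k) a := by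
  unfold _root_.qpoch
  fun_prop

/-- In a punctured neighbourhood of any `s`, `t ^ 2` is not a root of unity of small order. -/
lemma eventually_sq_pow_ne_one (s : ℂ) (m : ℕ) :
    ∀ᶠ t in 𝓝[≠] s, ∀ i, 1 ≤ i → i ≤ m → (t ^ 2) ^ i ≠ 1 := by
  have hfin : (⋃ i ∈ Finset.Icc 1 m, {t : ℂ | (t ^ 2) ^ i = 1}).Finite := by
    refine Set.Finite.biUnion (Finset.finite_toSet _) fun i hi => ?_
    have hi : 0 < 2 * i := by
      have := (Finset.mem_Icc.1 hi).1
      omega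
    refine (Polynomial.nthRoots (2 * i) (1 : ℂ)).toFinset.finite_toSet.subset fun t ht => ?_
    simpa [Polynomial.mem_nthRoots hi, pow_mul] using ht
  have h := (hfin.subset (Set.sdiff_subset (t := {s}))).isClosed.isOpen_compl.mem_nhds
    (x := s) (by simp)
  filter_upwards [mem_nhdsWithin_of_mem_nhds h, self_mem_nhdsWithin] with t ht hts i h1 h2 h3
  exact ht ⟨Set.mem_biUnion (Finset.mem_coe.2 (Finset.mem_Icc.2 ⟨h1, h2⟩)) h3, hts⟩

theorem q_gosper_first_ext_ell_one (n : ℕ) (q x s : ℂ) (hs : s ^ 2 = q)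
    (hq : q ≠ 0) (hx : x ≠ 0)
    (hden : ∀ k ≤ n,
      qpoch q q k * qpoch (-1) q k * qpoch s q k * qpoch (-s) q k *
        qpoch (q ^ (-(3*n : ℤ))) q k ≠ 0)
    (hden2 : qpoch q (q^3) n * qpoch (q^2) (q^3) n ≠ 0) :
    ∑ k ∈ Finset.range (n+1),
      qpoch (q ^ (-(3*n : ℤ))) (q^3) k * (qpoch x q k * qpoch (1/x) q k) /
        (qpoch q q k * qpoch (-1) q k * qpoch s q k * qpoch (-s) q k *
          qpoch (q ^ (-(3*n : ℤ))) q k) * q^k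
      = (1/2 : ℂ) * ((qpoch (q*x) (q^3) n * qpoch (q^2/x) (q^3) n) /
            (qpoch q (q^3) n * qpoch (q^2) (q^3) n))
        + (1/2 : ℂ) * ((qpoch (q^2*x) (q^3) n * qpoch (q/x) (q^3) n) /
            (qpoch q (q^3) n * qpoch (q^2) (q^3) n)) := by
  subst hs
  have hs0 : s ≠ 0 := fun h0 => hq (by simp [h0])
  have hz : ContinuousAt (fun t : ℂ => (t ^ 2) ^ (-(3*n : ℤ))) s :=
    (continuousAt_id.pow 2).zpow₀ _ (Or.inl hq)
  have hsq : ContinuousAt (fun t : ℂ => t ^ 2) s := by fun_prop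
  have hcube : ContinuousAt (fun t : ℂ => (t ^ 2) ^ 3) s := by fun_prop
  have hL : ContinuousAt (fun t : ℂ => ∑ k ∈ Finset.range (n+1),
      qpoch ((t ^ 2) ^ (-(3*n : ℤ))) ((t ^ 2)^3) k * (qpoch x (t ^ 2) k * qpoch (1/x) (t ^ 2) k) /
        (qpoch (t ^ 2) (t ^ 2) k * qpoch (-1) (t ^ 2) k * qpoch t (t ^ 2) k * qpoch (-t) (t ^ 2) k *
          qpoch ((t ^ 2) ^ (-(3*n : ℤ))) (t ^ 2) k) * (t ^ 2)^k) s := by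
    refine tendsto_finsetSum _ fun k hk => ?_
    refine ContinuousAt.mul (ContinuousAt.div ?_ ?_ ?_) (hsq.pow k)
    · exact (hz.qpoch hcube k).mul
        ((continuousAt_const.qpoch hsq k).mul (continuousAt_const.qpoch hsq k))
    · exact ((((hsq.qpoch hsq k).mul (continuousAt_const.qpoch hsq k)).mul
        (continuousAt_id.qpoch hsq k)).mul (continuousAt_id.neg.qpoch hsq k)).mul
        (hz.qpoch hsq k)
    · exact hden k (by simpa [Nat.lt_succ_iff] using hk)
  have hD : ContinuousAt (fun t : ℂ =>
      qpoch (t ^ 2) ((t ^ 2)^3) n * qpoch ((t ^ 2)^2) ((t ^ 2)^3) n) s :=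
    (hsq.qpoch hcube n).mul ((hsq.pow 2).qpoch hcube n)
  have hR : ContinuousAt (fun t : ℂ =>
      (1/2 : ℂ) * ((qpoch ((t ^ 2)*x) ((t ^ 2)^3) n * qpoch ((t ^ 2)^2/x) ((t ^ 2)^3) n) /
            (qpoch (t ^ 2) ((t ^ 2)^3) n * qpoch ((t ^ 2)^2) ((t ^ 2)^3) n))
        + (1/2 : ℂ) * ((qpoch ((t ^ 2)^2*x) ((t ^ 2)^3) n * qpoch ((t ^ 2)/x) ((t ^ 2)^3) n) /
            (qpoch (t ^ 2) ((t ^ 2)^3) n * qpoch ((t ^ 2)^2) ((t ^ 2)^3) n))) s := by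
    refine (continuousAt_const.mul (ContinuousAt.div ?_ hD hden2)).add
      (continuousAt_const.mul (ContinuousAt.div ?_ hD hden2))
    · exact ((hsq.mul_const x).qpoch hcube n).mul (((hsq.pow 2).div_const x).qpoch hcube n)
    · exact (((hsq.pow 2).mul_const x).qpoch hcube n).mul ((hsq.div_const x).qpoch hcube n)
  refine tendsto_nhds_unique_of_eventuallyEq (hL.tendsto.mono_left nhdsWithin_le_nhds)
    (hR.tendsto.mono_left (nhdsWithin_le_nhds (s := {s}ᶜ))) ?_
  filter_upwards [eventually_sq_pow_ne_one s (3 * n),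
    mem_nhdsWithin_of_mem_nhds (isOpen_ne.mem_nhds hs0)] with t ht ht0
  exact q_gosper_first_ext_of_pow_ne_one n (t ^ 2) x t rfl (pow_ne_zero 2 ht0) hx ht
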